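/- Let a, b be non-zero rational integers and c_α, c_β non-zero rational integers, and let α, β be roots of unity with ord(α) ≤ ord(β). If 0 = a + b·i + c_α·α + c_β·β, then α = ±1, β = ±i, and moreover a + α·c_α = 0 and b·i + β·c_β = 0. -/

import Mathlib

noncomputable section VanishingAux

open Polynomial

local instance gaussAlg : Algebra GaussianInt ℂ := GaussianInt.toComplex.toAlgebra

theorem gauss_inj : Function.Injective (algebraMap GaussianInt ℂ) := by
  intro x y h
  exact GaussianInt.toComplex_inj.1 h

local instance gaussTF : Module.IsTorsionFree GaussianInt ℂ :=
  Module.isTorsionFree_iff_algebraMap_injective.2 gauss_inj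

theorem gauss_quad (α : ℂ) (hα : ∃ n : ℕ, 0 < n ∧ α ^ n = 1) (A B D : GaussianInt) (hA : A ≠ 0)
    (h : (A : ℂ) * α ^ 2 + (B : ℂ) * α + (D : ℂ) = 0) :
    (∃ g : GaussianInt, α = (g : ℂ)) ∨
      ∃ s u : GaussianInt, α ^ 2 + (s : ℂ) * α + (u : ℂ) = 0 ∧ B = A * s ∧ D = A * u := by
  obtain ⟨n, hn, hpow⟩ := hα
  have hint : IsIntegral GaussianInt α := by
    apply IsIntegral.of_pow hn
    rw [hpow]
    exact isIntegral_one
  set p : GaussianInt[X] := C A * X ^ 2 + C B * X + C D with hp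
  have hp0 : aeval α p = 0 := by
    simpa [hp, RingHom.algebraMap_toAlgebra] using h
  have c2 : p.coeff 2 = A := by simp [hp, coeff_X, coeff_C]
  have c1 : p.coeff 1 = B := by simp [hp, coeff_X, coeff_C]
  have c0 : p.coeff 0 = D := by simp [hp]
  obtain ⟨q, hq⟩ := minpoly.isIntegrallyClosed_dvd hint hp0
  have hmon := minpoly.monic hint
  have hpos := minpoly.natDegree_pos hint
  have hev := minpoly.aeval GaussianInt α
  generalize minpoly GaussianInt α = m at *
  have hpne : p ≠ 0 := by
    intro h0
    rw [h0] at c2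
    exact hA (by simpa using c2.symm)
  have hqne : q ≠ 0 := by
    rintro rfl
    exact hpne (by simpa using hq)
  have hdeg : p.natDegree ≤ 2 := natDegree_quadratic_le
  have hdeg' := hdeg
  rw [hq, hmon.natDegree_mul' hqne] at hdeg'
  have hm : m.natDegree = 1 ∨ (m.natDegree = 2 ∧ q.natDegree = 0) := by omega
  rcases hm with hm | ⟨hm, hq0⟩
  · left
    refine ⟨-m.coeff 0, ?_⟩
    rw [hmon.eq_X_add_C hm] at hev
    simp only [map_add, aeval_X, aeval_C, RingHom.algebraMap_toAlgebra] at hev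
    simp only [map_neg]
    linear_combination hev
  · right
    rw [eq_C_of_natDegree_eq_zero hq0] at hq
    have m2 : m.coeff 2 = 1 := by
      have := hmon.coeff_natDegree
      rwa [hm] at this
    rw [hq, coeff_mul_C] at c2 c1 c0
    rw [m2, one_mul] at c2
    refine ⟨m.coeff 1, m.coeff 0, ?_, ?_, ?_⟩
    · rw [aeval_eq_sum_range, hm] at hev
      simp only [Finset.sum_range_succ, Algebra.smul_def, m2, RingHom.algebraMap_toAlgebra] at hev
      simp at hev
      linear_combination hev
    · rw [← c1, c2, mul_comm]
    · rw [← c0, c2, mul_comm]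

theorem int_unit (x y : ℤ) (h : x ^ 2 + y ^ 2 = 1) :
    (x = 1 ∧ y = 0) ∨ (x = -1 ∧ y = 0) ∨ (x = 0 ∧ y = 1) ∨ (x = 0 ∧ y = -1) := by
  have h1 : x ≤ 1 := by nlinarith
  have h2 : -1 ≤ x := by nlinarith
  have h3 : y ≤ 1 := by nlinarith
  have h4 : -1 ≤ y := by nlinarith
  interval_cases x <;> interval_cases y <;> simp_all

theorem gauss_unit (α : ℂ) (hn : ‖α‖ = 1) (g : GaussianInt) (h : α = (g : ℂ)) :
    α = 1 ∨ α = -1 ∨ α = Complex.I ∨ α = -Complex.I := by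
  have h1 : Complex.normSq α = 1 := by rw [Complex.normSq_eq_norm_sq, hn]; norm_num
  rw [h, Complex.normSq_apply] at h1
  rw [← GaussianInt.intCast_re, ← GaussianInt.intCast_im] at h1
  have h2 : g.re ^ 2 + g.im ^ 2 = 1 := by
    have : ((g.re ^ 2 + g.im ^ 2 : ℤ) : ℝ) = (1 : ℤ) := by
      push_cast
      linarith
    exact_mod_cast this
  rw [h, GaussianInt.toComplex_def]
  rcases int_unit _ _ h2 with ⟨h, h'⟩ | ⟨h, h'⟩ | ⟨h, h'⟩ | ⟨h, h'⟩ <;> simp [h, h']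

theorem root_norm (α : ℂ) (hα : ∃ n : ℕ, 0 < n ∧ α ^ n = 1) : ‖α‖ = 1 := by
  obtain ⟨n, hn, h⟩ := hα
  exact Complex.norm_eq_one_of_pow_eq_one h hn.ne'

theorem quad_eq (a b c d : ℤ) (α β : ℂ) (hα : ‖α‖ = 1) (hβ : ‖β‖ = 1)
    (heq : 0 = (a : ℂ) + (b : ℂ) * Complex.I + (c : ℂ) * α + (d : ℂ) * β) :
    ((c : ℂ) * (a - b * Complex.I)) * α ^ 2 + ((a : ℂ) ^ 2 + b ^ 2 + c ^ 2 - d ^ 2) * α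
      + c * (a + b * Complex.I) = 0 := by
  have e1 : α * (starRingEnd ℂ) α = 1 := by
    rw [Complex.mul_conj, Complex.normSq_eq_norm_sq, hα]; norm_num
  have e2 : β * (starRingEnd ℂ) β = 1 := by
    rw [Complex.mul_conj, Complex.normSq_eq_norm_sq, hβ]; norm_num
  have e3 := congrArg (starRingEnd ℂ) heq
  simp at e3
  generalize (starRingEnd ℂ) α = α' at *
  generalize (starRingEnd ℂ) β = β' at *
  have f1 : (d : ℂ) * β = -(a + b * Complex.I + c * α) := by linear_combination -heq
  have f2 : (d : ℂ) * β' = -(a - b * Complex.I + c * α') := by linear_combination -e3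
  have f3 : (d : ℂ) ^ 2 = (a + b * Complex.I + c * α) * (a - b * Complex.I + c * α') := by
    have : (d : ℂ) ^ 2 = (d * β) * (d * β') := by linear_combination -(d : ℂ) ^ 2 * e2
    rw [this, f1, f2]; ring
  have hI := Complex.I_sq
  linear_combination (-α) * f3 + (-(c : ℂ) * (a + b * Complex.I) - c ^ 2 * α) * e1 + b ^ 2 * α * hI

theorem small (x : ℤ) (w : ℂ) (α v : ℂ) (hα : ‖α‖ = 1) (hv : ‖v‖ = 1) (hw : ‖w‖ ^ 2 = 2)
    (h : α ^ 2 + ((x : ℂ) * w) * α + v = 0) : x = 0 ∨ x = 1 ∨ x = -1 := by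
  have h1 : ‖((x : ℂ) * w) * α‖ ≤ 2 := by
    have : ((x : ℂ) * w) * α = -(α ^ 2 + v) := by linear_combination h
    rw [this, norm_neg]
    refine (norm_add_le _ _).trans ?_
    rw [norm_pow, hα, hv]; norm_num
  rw [norm_mul, hα, mul_one, norm_mul, Complex.norm_intCast] at h1
  have h2 : (x : ℝ) ^ 2 ≤ 2 := by
    have h0 : 0 ≤ |(x : ℝ)| * ‖w‖ := by positivity
    have : (|(x : ℝ)| * ‖w‖) ^ 2 ≤ 4 := by nlinarith
    rw [mul_pow, sq_abs, hw] at this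
    linarith
  have h3 : x ^ 2 ≤ 2 := by exact_mod_cast h2
  have : x ≤ 1 := by nlinarith
  have : -1 ≤ x := by nlinarith
  omega

theorem key (a b c d : ℤ) (ha : a ≠ 0) (hb : b ≠ 0) (hc : c ≠ 0)
    (α β : ℂ) (hα : ∃ n : ℕ, 0 < n ∧ α ^ n = 1) (hβ : ∃ n : ℕ, 0 < n ∧ β ^ n = 1)
    (heq : 0 = (a : ℂ) + (b : ℂ) * Complex.I + (c : ℂ) * α + (d : ℂ) * β) :
    (∃ g : GaussianInt, α = (g : ℂ)) ∨ a ^ 2 + b ^ 2 + c ^ 2 = d ^ 2 := by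
  have nα := root_norm α hα
  have nβ := root_norm β hβ
  have hq := quad_eq a b c d α β nα nβ heq
  rcases gauss_quad α hα ⟨c * a, -(c * b)⟩ ⟨a ^ 2 + b ^ 2 + c ^ 2 - d ^ 2, 0⟩ ⟨c * a, c * b⟩
    (by
      intro h
      have := congrArg Zsqrtd.re h
      simp [ha, hc] at this)
    (by
      simp only [GaussianInt.toComplex_def]
      push_cast
      linear_combination hq) with h | ⟨s, u, h, hB, hD⟩
  · exact Or.inl h
  obtain ⟨s1, s2⟩ := s
  obtain ⟨u1, u2⟩ := u
  simp only [Zsqrtd.ext_iff, Zsqrtd.re_mul, Zsqrtd.im_mul] at hB hD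
  obtain ⟨B1, B2⟩ := hB
  obtain ⟨D1, D2⟩ := hD
  have D1' : a = a * u1 + b * u2 := mul_left_cancel₀ hc (by linear_combination D1)
  have D2' : b = a * u2 - b * u1 := mul_left_cancel₀ hc (by linear_combination D2)
  have B2' : a * s2 = b * s1 := mul_left_cancel₀ hc (by linear_combination -B2)
  have hne : a ^ 2 + b ^ 2 ≠ 0 := by positivity
  have hu : u1 ^ 2 + u2 ^ 2 = 1 := by
    apply mul_left_cancel₀ hne
    have : a ^ 2 + b ^ 2 = (a * u1 + b * u2) ^ 2 + (a * u2 - b * u1) ^ 2 := by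
      rw [← D1', ← D2']
    linear_combination -this
  simp only [GaussianInt.toComplex_def] at h
  have hI := Complex.I_sq
  rcases int_unit _ _ hu with ⟨rfl, rfl⟩ | ⟨rfl, rfl⟩ | ⟨rfl, rfl⟩ | ⟨rfl, rfl⟩
  · omega
  · omega
  · have hab : a = b := by omega
    subst hab
    have hs : s2 = s1 := mul_left_cancel₀ ha B2'
    subst hs
    push_cast at h
    have hx := small s2 (1 + Complex.I) α Complex.I nα (by simp)
      (by rw [← Complex.normSq_eq_norm_sq, Complex.normSq_apply]; norm_num)
      (by linear_combination h)
    rcases hx with rfl | rfl | rfl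
    · right; linear_combination B1
    · left
      have : (α + 1) * (α + Complex.I) = 0 := by push_cast at h; linear_combination h
      rcases mul_eq_zero.1 this with h | h
      · exact ⟨⟨-1, 0⟩, by rw [GaussianInt.toComplex_def]; push_cast; linear_combination h⟩
      · exact ⟨⟨0, -1⟩, by rw [GaussianInt.toComplex_def]; push_cast; linear_combination h⟩
    · left
      have : (α - 1) * (α - Complex.I) = 0 := by push_cast at h; linear_combination h
      rcases mul_eq_zero.1 this with h | h
      · exact ⟨⟨1, 0⟩, by rw [GaussianInt.toComplex_def]; push_cast; linear_combination h⟩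
      · exact ⟨⟨0, 1⟩, by rw [GaussianInt.toComplex_def]; push_cast; linear_combination h⟩
  · have hab : b = -a := by omega
    subst hab
    have hs : s2 = -s1 := mul_left_cancel₀ ha (by linear_combination B2')
    subst hs
    push_cast at h
    have hx := small s1 (1 - Complex.I) α (-Complex.I) nα (by simp)
      (by rw [← Complex.normSq_eq_norm_sq, Complex.normSq_apply]; norm_num)
      (by linear_combination h)
    rcases hx with rfl | rfl | rfl
    · right; linear_combination B1
    · left
      have : (α + 1) * (α - Complex.I) = 0 := by push_cast at h; linear_combination h
      rcases mul_eq_zero.1 this with h | h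
      · exact ⟨⟨-1, 0⟩, by rw [GaussianInt.toComplex_def]; push_cast; linear_combination h⟩
      · exact ⟨⟨0, 1⟩, by rw [GaussianInt.toComplex_def]; push_cast; linear_combination h⟩
    · left
      have : (α - 1) * (α + Complex.I) = 0 := by push_cast at h; linear_combination h
      rcases mul_eq_zero.1 this with h | h
      · exact ⟨⟨1, 0⟩, by rw [GaussianInt.toComplex_def]; push_cast; linear_combination h⟩
      · exact ⟨⟨0, -1⟩, by rw [GaussianInt.toComplex_def]; push_cast; linear_combination h⟩

theorem other (a b c d : ℤ) (hd : d ≠ 0)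
    (α β : ℂ) (hβ : ∃ n : ℕ, 0 < n ∧ β ^ n = 1)
    (heq : 0 = (a : ℂ) + (b : ℂ) * Complex.I + (c : ℂ) * α + (d : ℂ) * β)
    (h : ∃ g : GaussianInt, α = (g : ℂ)) : ∃ g : GaussianInt, β = (g : ℂ) := by
  obtain ⟨g, rfl⟩ := h
  have hβ0 : β ≠ 0 := by
    intro h0
    have := root_norm β hβ
    simp [h0] at this
  rcases gauss_quad β hβ (d : GaussianInt) (⟨a, b⟩ + c * g) 0 (by exact_mod_cast hd)
    (by
      simp only [map_add, map_mul, map_intCast, map_zero, GaussianInt.toComplex_def ⟨a, b⟩]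
      linear_combination (-β) * heq) with h | ⟨s, u, h, hB, hD⟩
  · exact h
  · have hu : u = 0 := by
      rcases mul_eq_zero.1 hD.symm with h | h
      · exact absurd (by exact_mod_cast h) hd
      · exact h
    subst hu
    refine ⟨-s, ?_⟩
    apply mul_left_cancel₀ hβ0
    simp only [map_neg, map_zero] at h ⊢
    linear_combination h

end VanishingAux

theorem ord_I : orderOf Complex.I = 4 := by
  have : orderOf Complex.I = 2 ^ (1 + 1) := by
    apply orderOf_eq_prime_pow
    · simp only [pow_one, Complex.I_sq]; norm_num
    · simp
  simpa using this

theorem ord_negI : orderOf (-Complex.I) = 4 := by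
  have : orderOf (-Complex.I) = 2 ^ (1 + 1) := by
    apply orderOf_eq_prime_pow
    · simp only [pow_one, neg_sq, Complex.I_sq]; norm_num
    · norm_num [Even.neg_pow (show Even 4 by decide)]
  simpa using this

theorem ord_one_le (β : ℂ) (h : β = 1 ∨ β = -1) : orderOf β ≤ 2 :=
  orderOf_le_of_pow_eq_one (by norm_num) (by rcases h with rfl | rfl <;> norm_num)

/-- Lemma 4.4 (vanishing sum): if `0 = a + b·i + c_α·α + c_β·β` with `a, b, c_α, c_β`
nonzero integers and `α, β` roots of unity with `ord(α) ≤ ord(β)`, then `α = ±1`,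
`β = ±i`, `a + α·c_α = 0` and `b·i + β·c_β = 0`. -/
theorem vanishing_sum (a b cα cβ : ℤ) (ha : a ≠ 0) (hb : b ≠ 0) (hcα : cα ≠ 0) (hcβ : cβ ≠ 0)
    (α β : ℂ) (hα : ∃ n : ℕ, 0 < n ∧ α ^ n = 1) (hβ : ∃ n : ℕ, 0 < n ∧ β ^ n = 1)
    (hord : orderOf α ≤ orderOf β)
    (heq : 0 = (a : ℂ) + (b : ℂ) * Complex.I + (cα : ℂ) * α + (cβ : ℂ) * β) :
    (α = 1 ∨ α = -1) ∧ (β = Complex.I ∨ β = -Complex.I) ∧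
      (a : ℂ) + α * (cα : ℂ) = 0 ∧ (b : ℂ) * Complex.I + β * (cβ : ℂ) = 0 := by
  have heq' : 0 = (a : ℂ) + (b : ℂ) * Complex.I + (cβ : ℂ) * β + (cα : ℂ) * α := by
    linear_combination heq
  have hboth : (∃ g : GaussianInt, α = (g : ℂ)) ∧ (∃ g : GaussianInt, β = (g : ℂ)) := by
    rcases key a b cα cβ ha hb hcα α β hα hβ heq with h | h
    · exact ⟨h, other a b cα cβ hcβ α β hβ heq h⟩
    rcases key a b cβ cα ha hb hcβ β α hβ hα heq' with h' | h'
    · exact ⟨other a b cβ cα hcα β α hα heq' h', h'⟩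
    · exfalso
      have : 0 < a ^ 2 := by positivity
      have : 0 < b ^ 2 := by positivity
      linarith
  obtain ⟨⟨g, hg⟩, ⟨k, hk⟩⟩ := hboth
  have uα := gauss_unit α (root_norm α hα) g hg
  have uβ := gauss_unit β (root_norm β hβ) k hk
  have hre := congrArg Complex.re heq
  have him := congrArg Complex.im heq
  clear hg hk heq heq'
  have hb' : (b : ℝ) ≠ 0 := by exact_mod_cast hb
  have ha' : (a : ℝ) ≠ 0 := by exact_mod_cast ha
  have oI := ord_I
  have oJ := ord_negI
  have o1 := ord_one_le 1 (Or.inl rfl)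
  have o2 := ord_one_le (-1) (Or.inr rfl)
  rcases uα with rfl | rfl | rfl | rfl <;> rcases uβ with rfl | rfl | rfl | rfl <;>
    simp at hre him <;>
    first
    | exact absurd him.symm hb'
    | exact absurd him hb
    | exact absurd hre.symm ha'
    | exact absurd hre ha
    | (exfalso
       omega)
    | (refine ⟨by simp, by simp, ?_, ?_⟩ <;> apply Complex.ext <;> simp <;> linarith)
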